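/- Let G be a bull-free graph containing an induced 5-cycle C with vertices c1,...,c5 (edges c_i c_{i+1} mod 5), and suppose every vertex adjacent to all of C that has a neighbor with no neighbors on C exists (i.e., G contains an umbrella with cycle C). Let A' be the set of vertices complete to C having a neighbor in the set Z of vertices anticomplete to C, and let A'' be the set of vertices complete to C, not in A', having a non-neighbor in A'. Let H be the connected component of G \ (A' ∪ A'') containing the vertices of C. Then A' ∪ A'' is complete to V(H). -/

import Mathlib

open SimpleGraph

variable {V : Type*}

/-- The vertices `a b c d e` induce a bull in `G` (edges ab, bc, cd, be, ce). -/
def IsBull (G : SimpleGraph V) (a b c d e : V) : Prop :=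
  a ≠ b ∧ a ≠ c ∧ a ≠ d ∧ a ≠ e ∧ b ≠ c ∧ b ≠ d ∧ b ≠ e ∧ c ≠ d ∧ c ≠ e ∧ d ≠ e ∧
  G.Adj a b ∧ G.Adj b c ∧ G.Adj c d ∧ G.Adj b e ∧ G.Adj c e ∧
  ¬ G.Adj a c ∧ ¬ G.Adj a d ∧ ¬ G.Adj a e ∧ ¬ G.Adj b d ∧ ¬ G.Adj d e

/-- `G` contains no induced bull. -/
def BullFree (G : SimpleGraph V) : Prop := ∀ a b c d e : V, ¬ IsBull G a b c d e

/-- `G` contains no induced path on six vertices. -/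
def P6Free (G : SimpleGraph V) : Prop :=
  ¬ ∃ p : Fin 6 → V, Function.Injective p ∧
      ∀ i j : Fin 6, G.Adj (p i) (p j) ↔ (i.val + 1 = j.val ∨ j.val + 1 = i.val)

/-- `c` lists the vertices of an induced 5-cycle in `G` (indices mod 5). -/
def IsInducedC5 (G : SimpleGraph V) (c : Fin 5 → V) : Prop :=
  Function.Injective c ∧ ∀ i j : Fin 5, G.Adj (c i) (c j) ↔ (j = i + 1 ∨ i = j + 1)

/-- `S` is a homogeneous set in `G`. -/
def IsHomogeneous (G : SimpleGraph V) (S : Set V) : Prop :=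
  ∀ v ∉ S, (∀ s ∈ S, G.Adj v s) ∨ (∀ s ∈ S, ¬ G.Adj v s)

/-- `S` is a proper homogeneous set: homogeneous, of size at least two, not all of `V`. -/
def IsProperHomogeneous (G : SimpleGraph V) (S : Set V) : Prop :=
  IsHomogeneous G S ∧ (∃ a ∈ S, ∃ b ∈ S, a ≠ b) ∧ S ≠ Set.univ

/-- A graph is prime if it has no proper homogeneous set. -/
def IsPrimeGraph (G : SimpleGraph V) : Prop := ¬ ∃ S : Set V, IsProperHomogeneous G S

/-- Number of neighbors of `x` on the 5-cycle `c`. -/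
def nbrCount (G : SimpleGraph V) [DecidableRel G.Adj] (c : Fin 5 → V) (x : V) : ℕ :=
  (Finset.univ.filter fun i : Fin 5 => G.Adj x (c i)).card

theorem noBull {G : SimpleGraph V} (hB : BullFree G) (a b c d e : V)
    (h1 : G.Adj a b) (h2 : G.Adj b c) (h3 : G.Adj c d) (h4 : G.Adj b e) (h5 : G.Adj c e)
    (n1 : ¬ G.Adj a c) (n2 : ¬ G.Adj a d) (n3 : ¬ G.Adj a e) (n4 : ¬ G.Adj b d)
    (n5 : ¬ G.Adj d e) : False := by
  refine hB a b c d e ⟨h1.ne, ?_, ?_, ?_, h2.ne, ?_, h4.ne, h3.ne, h5.ne, ?_,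
    h1, h2, h3, h4, h5, n1, n2, n3, n4, n5⟩
  · rintro rfl; exact n2 h3
  · rintro rfl; exact n4 h1.symm
  · rintro rfl; exact n1 h5.symm
  · rintro rfl; exact n2 h1
  · rintro rfl; exact n4 h4

/-- From a vertex with a neighbor and a non-neighbor on the cycle, get a rotated labelling. -/
theorem exists_step {G : SimpleGraph V} {c : Fin 5 → V} {x : V}
    (h1 : ¬ ∀ i, G.Adj x (c i)) (h2 : ¬ ∀ i, ¬ G.Adj x (c i)) :
    ∃ i, G.Adj x (c i) ∧ ¬ G.Adj x (c (i + 1)) := by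
  by_contra hcon
  push Not at hcon h2
  obtain ⟨j, hj⟩ := h2
  have e1 := hcon _ hj
  have e2 := hcon _ e1
  have e3 := hcon _ e2
  have e4 := hcon _ e3
  apply h1
  intro i
  have : i = j ∨ i = j+1 ∨ i = j+1+1 ∨ i = j+1+1+1 ∨ i = j+1+1+1+1 := by
    clear e1 e2 e3 e4 hj
    revert i j; decide
  rcases this with h | h | h | h | h <;> rw [h] <;> assumption

/-- A labelled induced five-cycle. -/
structure Cyc (G : SimpleGraph V) (p q r s t : V) : Prop where
  pq : G.Adj p q
  pt : G.Adj p t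
  st : G.Adj s t
  pr : ¬ G.Adj r p
  sp : ¬ G.Adj s p
  sq : ¬ G.Adj s q
  qt : ¬ G.Adj q t

theorem exists_cyc {G : SimpleGraph V} {c : Fin 5 → V} (hc : IsInducedC5 G c) {x : V}
    (h1 : ¬ ∀ i, G.Adj x (c i)) (h2 : ¬ ∀ i, ¬ G.Adj x (c i)) :
    ∃ i1 i2 i3 i4 i5, Cyc G (c i1) (c i2) (c i3) (c i4) (c i5) ∧
      G.Adj x (c i1) ∧ ¬ G.Adj x (c i2) := by
  obtain ⟨i, hi, hi'⟩ := exists_step h1 h2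
  refine ⟨i, i+1, i+2, i+3, i+4, ?_, hi, hi'⟩
  clear hi hi' h1 h2
  constructor <;> rw [hc.2] <;> revert i <;> decide

theorem core {G : SimpleGraph V} (hB : BullFree G) {c : Fin 5 → V} (hc : IsInducedC5 G c)
    {x a z : V} (h1 : ¬ ∀ i, G.Adj x (c i)) (h2 : ¬ ∀ i, ¬ G.Adj x (c i))
    (ha : ∀ i, G.Adj a (c i)) (hz : ∀ i, ¬ G.Adj z (c i)) (hax : ¬ G.Adj a x) :
    ¬ G.Adj z x := by
  intro hzx
  obtain ⟨p, q, r, s, t, C, xp, xq⟩ := exists_cyc hc h1 h2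
  have xs : G.Adj x (c s) := by
    by_contra xs
    exact noBull hB (c s) a (c p) x (c q) (ha s).symm (ha p) xp.symm (ha q) C.pq
      C.sp (fun h => xs h.symm) C.sq hax xq
  have xt : G.Adj x (c t) := by
    by_contra xt
    exact noBull hB (c q) a (c s) x (c t) (ha q).symm (ha s) xs.symm (ha t) C.st
      (fun h => C.sq h.symm) (fun h => xq h.symm) C.qt hax xt
  exact noBull hB z x (c p) (c q) (c t) hzx xp C.pq xt C.pt (hz p) (hz q) (hz t) xq C.qt

theorem claim1 {G : SimpleGraph V} (hB : BullFree G) {c : Fin 5 → V} (hc : IsInducedC5 G c)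
    {x a z : V} (h1 : ¬ ∀ i, G.Adj x (c i)) (h2 : ¬ ∀ i, ¬ G.Adj x (c i))
    (ha : ∀ i, G.Adj a (c i)) (hz : ∀ i, ¬ G.Adj z (c i)) (haz : G.Adj a z) :
    G.Adj a x := by
  by_contra hax
  have hzx := core hB hc h1 h2 ha hz hax
  obtain ⟨p, q, r, s, t, C, xp, xq⟩ := exists_cyc hc h1 h2
  exact noBull hB z a (c p) x (c q) haz.symm (ha p) xp.symm (ha q) C.pq (hz p) hzx (hz q) hax xq

theorem claim2 {G : SimpleGraph V} (hB : BullFree G) {c : Fin 5 → V} (hc : IsInducedC5 G c)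
    {x a b z : V} (h1 : ¬ ∀ i, G.Adj x (c i)) (h2 : ¬ ∀ i, ¬ G.Adj x (c i))
    (ha : ∀ i, G.Adj a (c i)) (hz : ∀ i, ¬ G.Adj z (c i)) (haz : G.Adj a z)
    (hb : ∀ i, G.Adj b (c i)) (hab : ¬ G.Adj b a) (hbz : ¬ G.Adj b z) :
    G.Adj b x := by
  by_contra hbx
  have hzx := core hB hc h1 h2 hb hz hbx
  have hax := claim1 hB hc h1 h2 ha hz haz
  obtain ⟨p, q, r, s, t, C, xp, xq⟩ := exists_cyc hc h1 h2
  exact noBull hB z a (c p) b x haz.symm (ha p) (hb p).symm hax xp.symm (hz p)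
    (fun h => hbz h.symm) hzx (fun h => hab h.symm) hbx

theorem claim3 {G : SimpleGraph V} (hB : BullFree G) {c : Fin 5 → V} (hc : IsInducedC5 G c)
    {x a z : V} (h1 : ¬ ∀ i, G.Adj x (c i)) (h2 : ¬ ∀ i, ¬ G.Adj x (c i))
    (ha : ∀ i, G.Adj a (c i)) (hz : ∀ i, ¬ G.Adj z (c i)) (hax : G.Adj a x)
    (hxz : G.Adj x z) : G.Adj a z := by
  by_contra haz
  obtain ⟨p, q, r, s, t, C, xp, xq⟩ := exists_cyc hc h1 h2
  have xs : G.Adj x (c s) := by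
    by_contra xs
    exact noBull hB z x a (c s) (c p) hxz.symm hax.symm (ha s) xp (ha p)
      (fun h => haz h.symm) (hz s) (hz p) xs C.sp
  exact noBull hB z x a (c q) (c s) hxz.symm hax.symm (ha q) xs (ha s)
      (fun h => haz h.symm) (hz q) (hz s) xq (fun h => C.sq h.symm)

/-- Reachability in `n` steps avoiding `A`. -/
def Rch (G : SimpleGraph V) (A : Set V) (v0 : V) : ℕ → V → Prop
  | 0, v => v = v0
  | n + 1, v => v ∉ A ∧ ∃ w, Rch G A v0 n w ∧ G.Adj w v

theorem walk_rch (G : SimpleGraph V) (A : Set V) (v0 : V) {u v : V} (p : G.Walk u v) :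
    ∀ n, Rch G A v0 n u → (∀ w ∈ p.support, w ∉ A) → ∃ m, Rch G A v0 m v := by
  induction p with
  | nil => exact fun n h _ => ⟨n, h⟩
  | cons h p ih =>
    intro n hn hs
    refine ih (n + 1) ⟨hs _ (by simp), _, hn, h⟩ (fun w hw => hs w (by simp [hw]))

theorem stmt18 (G : SimpleGraph V) (hB : BullFree G)
    (c : Fin 5 → V) (hc : IsInducedC5 G c)
    (u t : V) (hu : ∀ i : Fin 5, G.Adj u (c i))
    (hut : G.Adj u t) (ht : ∀ i : Fin 5, ¬ G.Adj t (c i)) :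
    ∀ A' A'' VH : Set V,
      A' = {a : V | a ∉ Set.range c ∧ (∀ i : Fin 5, G.Adj a (c i)) ∧
              ∃ z : V, z ∉ Set.range c ∧ (∀ i : Fin 5, ¬ G.Adj z (c i)) ∧ G.Adj a z} →
      A'' = {a : V | a ∉ Set.range c ∧ (∀ i : Fin 5, G.Adj a (c i)) ∧
              a ∉ A' ∧ ∃ a' ∈ A', ¬ G.Adj a a'} →
      VH = {v : V | ∃ p : G.Walk (c 0) v, ∀ w ∈ p.support, w ∉ A' ∪ A''} →
      ∀ b ∈ A' ∪ A'', ∀ v ∈ VH, G.Adj b v := by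
  intro A' A'' VH hA' hA'' hVH
  have nr : ∀ z : V, (∀ i : Fin 5, ¬ G.Adj z (c i)) → z ∉ Set.range c := by
    rintro _ h ⟨i, rfl⟩
    exact h (i + 1) ((hc.2 _ _).2 (Or.inl rfl))
  have nr' : ∀ z : V, (∀ i : Fin 5, G.Adj z (c i)) → z ∉ Set.range c := by
    rintro _ h ⟨i, rfl⟩
    exact G.loopless.irrefl _ (h i)
  have mA' : ∀ a, a ∈ A' ↔ (∀ i : Fin 5, G.Adj a (c i)) ∧
      ∃ z : V, (∀ i : Fin 5, ¬ G.Adj z (c i)) ∧ G.Adj a z := by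
    intro a
    rw [hA']
    constructor
    · rintro ⟨_, h, z, _, h2, h3⟩
      exact ⟨h, z, h2, h3⟩
    · rintro ⟨h, z, h2, h3⟩
      exact ⟨nr' a h, h, z, nr z h2, h2, h3⟩
  have mA'' : ∀ a, a ∈ A'' ↔ (∀ i : Fin 5, G.Adj a (c i)) ∧ a ∉ A' ∧
      ∃ a' ∈ A', ¬ G.Adj a a' := by
    intro a
    rw [hA'']
    constructor
    · rintro ⟨_, h⟩
      exact h
    · intro h
      exact ⟨nr' a h.1, h⟩
  clear hA' hA''
  have comp : ∀ b ∈ A' ∪ A'', ∀ i, G.Adj b (c i) := by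
    rintro b (hb | hb)
    · exact ((mA' b).1 hb).1
    · exact ((mA'' b).1 hb).1
  have nz : ∀ b ∈ A'', ∀ z, (∀ i, ¬ G.Adj z (c i)) → ¬ G.Adj b z := by
    intro b hb z hz hbz
    obtain ⟨h1, h2, _⟩ := (mA'' b).1 hb
    exact h2 ((mA' b).2 ⟨h1, z, hz, hbz⟩)
  -- vertices with both a neighbor and a non-neighbor on the cycle
  have part : ∀ x, (¬ ∀ i, G.Adj x (c i)) → (¬ ∀ i, ¬ G.Adj x (c i)) →
      ∀ b ∈ A' ∪ A'', G.Adj b x := by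
    rintro x h1 h2 b (hb | hb)
    · obtain ⟨ha, z, hz, haz⟩ := (mA' b).1 hb
      exact claim1 hB hc h1 h2 ha hz haz
    · obtain ⟨hb1, hb2, a, haA, hab⟩ := (mA'' b).1 hb
      obtain ⟨ha, z, hz, haz⟩ := (mA' a).1 haA
      exact claim2 hB hc h1 h2 ha hz haz hb1 hab (nz b hb z hz)
  -- vertices complete to the cycle
  have full : ∀ x, x ∉ A' ∪ A'' → (∀ i, G.Adj x (c i)) → ∀ b ∈ A' ∪ A'', G.Adj b x := by
    intro x hx hxc b hb
    have hx1 : x ∉ A' := fun h => hx (Or.inl h)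
    have hx2 : ∀ a ∈ A', G.Adj x a := by
      intro a ha
      by_contra hn
      exact hx (Or.inr ((mA'' x).2 ⟨hxc, hx1, a, ha, hn⟩))
    rcases hb with hb | hb
    · exact (hx2 b hb).symm
    · by_contra hbx
      obtain ⟨hb1, hb2, a, haA, hab⟩ := (mA'' b).1 hb
      obtain ⟨ha, z, hz, haz⟩ := (mA' a).1 haA
      have hxz : ¬ G.Adj x z := fun h => hx1 ((mA' x).2 ⟨hxc, z, hz, h⟩)
      exact noBull hB z a (c 0) b x haz.symm (ha 0) (hb1 0).symm (hx2 a haA).symm (hxc 0).symm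
        (hz 0) (fun h => nz b hb z hz h.symm) (fun h => hxz h.symm) (fun h => hab h.symm) hbx
  have c0 : c 0 ∉ A' ∪ A'' := fun h => G.loopless.irrefl _ (comp _ h 0)
  have rnot : ∀ n v, Rch G (A' ∪ A'') (c 0) n v → v ∉ A' ∪ A'' := by
    intro n v h
    cases n with
    | zero => rw [show v = c 0 from h]; exact c0
    | succ n => exact h.1
  have main : ∀ n v, Rch G (A' ∪ A'') (c 0) n v → ∀ b ∈ A' ∪ A'', G.Adj b v := by
    intro n
    induction n using Nat.strong_induction_on with
    | _ n ih =>
    intro v hv b hb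
    have hvA := rnot n v hv
    by_cases h1 : ∀ i, G.Adj v (c i)
    · exact full v hvA h1 b hb
    by_cases h2 : ∀ i, ¬ G.Adj v (c i)
    swap
    · exact part v h1 h2 b hb
    have zc : ∀ m w v', Rch G (A' ∪ A'') (c 0) m w → (∀ i, ¬ G.Adj v' (c i)) → G.Adj w v' →
        ¬ ∀ i, G.Adj w (c i) := fun m w v' hw hv' hwv h =>
      rnot m w hw (Or.inl ((mA' w).2 ⟨h, v', hv', hwv⟩))
    cases n with
    | zero => rw [show v = c 0 from hv]; exact comp b hb 0
    | succ m =>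
      obtain ⟨_, w, hw, hwv⟩ := hv
      have hw1 := zc m w v hw h2 hwv
      have hbw := ih m (by omega) w hw b hb
      by_cases hw2 : ∀ i, ¬ G.Adj w (c i)
      swap
      · exact claim3 hB hc hw1 hw2 (comp b hb) h2 hbw hwv
      cases m with
      | zero =>
        rw [show w = c 0 from hw] at hwv
        exact absurd hwv.symm (h2 0)
      | succ k =>
        obtain ⟨_, y, hy, hyw⟩ := hw
        by_cases hyv : G.Adj y v
        · exact ih (k + 1) (by omega) v ⟨hvA, y, hy, hyv⟩ b hb
        have hby := ih k (by omega) y hy b hb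
        by_contra hbv
        have hy1 := zc k y w hy hw2 hyw
        push Not at hy1
        obtain ⟨j, hj⟩ := hy1
        exact noBull hB v w b (c j) y hwv.symm hbw.symm (comp b hb j) hyw.symm hby
          (fun h => hbv h.symm) (h2 j) (fun h => hyv h.symm) (hw2 j) (fun h => hj h.symm)
  intro b hb v hv
  rw [hVH] at hv
  obtain ⟨p, hp⟩ := hv
  obtain ⟨m, hm⟩ := walk_rch G (A' ∪ A'') (c 0) p 0 rfl hp
  exact main m v hm b hb
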